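/- Suppose there exist constants c > 0, λ > 0, β > 0, and an integer k_0 ≥ 2 such that p_k = c·exp(−λ k/(ln k)^β) for all k ≥ k_0 (near-exponential tail). Then τ_v ≍ (ln ln v)^β: there exist constants 0 < c_1 ≤ c_2 and an integer V such that c_1 · (ln ln v)^β ≤ τ_v ≤ c_2 · (ln ln v)^β for all v ≥ V. -/

import Mathlib

/-!
Write `f x = λ x / (ln x)^β`, so that `v p_k = exp (-x_k)` with `x_k = f k - ln v - ln c`.
The summand `v p_k (1 - p_k)^v` is at most `2 exp (-|x_k|)` and is bounded below when `x_k` lies in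
a bounded interval `[0, 2λ]`; hence `τ_v` counts, up to constants, the `k` for which `x_k` is of
order one.

*Upper bound.* For `k ≤ m` with `ln k ≥ 2β` one has `f m - f k ≥ λ (m - k) / (2 (ln m)^β)`
(`rate_sub_ge`). For `k < (ln v)^2` the points `x_k` are therefore separated by a multiple of
`(ln ln v)^(-β)`, and comparison with a geometric series (`sum_exp_neg_abs_le`) bounds their
contribution by `O((ln ln v)^β)`. For `k ≥ (ln v)^2`, `f k ≥ √k + 2 ln k` gives
`v p_k ≤ c / k^2`. The finitely many small `k` contribute at most `1` each.

*Lower bound.* Conversely `f m - f k ≤ λ (m - k) / (ln k)^β` (`rate_sub_le`). If `n` is the last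
index with `x_n < 0`, then `n ≥ √(ln v)` and the next `⌈(ln n)^β⌉` indices all have
`0 ≤ x_k ≤ 2λ`, so each contributes at least a fixed constant.
-/

open Filter Topology

/-- For a positive integer `v`, `ζ_v = Σ_k p_k (1 - p_k)^v`. -/
noncomputable def zetaIdx (p : ℕ → ℝ) (v : ℕ) : ℝ := ∑' k, p k * (1 - p k) ^ v

/-- The tail index `τ_v = v ζ_v`. -/
noncomputable def tailIdx (p : ℕ → ℝ) (v : ℕ) : ℝ := (v : ℝ) * zetaIdx p v

/-! ### Increments of the exponent -/

/-- The exponent `λ x / (ln x)^β` of the near-exponential tail. -/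
noncomputable def rate (lam β x : ℝ) : ℝ := lam * x / (Real.log x) ^ β

theorem rate_sub_le {lam β k m : ℝ} (hlam : 0 < lam) (hβ : 0 < β) (hk : 1 ≤ Real.log k)
    (hk0 : 0 < k) (hkm : k ≤ m) :
    rate lam β m - rate lam β k ≤ lam * (m - k) / (Real.log k) ^ β := by
  have hlog : Real.log k ≤ Real.log m := Real.log_le_log hk0 hkm
  have h1 : (Real.log k) ^ β ≤ (Real.log m) ^ β :=
    Real.rpow_le_rpow (by linarith) hlog hβ.le
  have h2 : 0 < (Real.log k) ^ β := Real.rpow_pos_of_pos (by linarith) _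
  have h3 : lam * m / (Real.log m) ^ β ≤ lam * m / (Real.log k) ^ β := by
    have : 0 ≤ lam * m := mul_nonneg hlam.le (by linarith)
    gcongr
  unfold rate
  rw [mul_sub, sub_div]
  linarith

/-- With `f = rate lam β`, no derivative is needed: `(ln m / ln k)^β ≤ (m / k)^(β / ln k) ≤ (m / k)^(1/2)`, so
`f k ≤ f m * √(k / m)`, and `1 - √t ≥ (1 - t) / 2`. -/
theorem rate_sub_ge {lam β k m : ℝ} (hlam : 0 < lam) (hβ : 0 < β) (hk : 1 ≤ Real.log k)
    (hkβ : 2 * β ≤ Real.log k) (hk0 : 0 < k) (hkm : k ≤ m) :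
    lam * (m - k) / (2 * (Real.log m) ^ β) ≤ rate lam β m - rate lam β k := by
  have hm0 : 0 < m := by linarith
  have hlog : Real.log k ≤ Real.log m := Real.log_le_log hk0 hkm
  have hA : 0 < (Real.log k) ^ β := Real.rpow_pos_of_pos (by linarith) _
  have hB : 0 < (Real.log m) ^ β := Real.rpow_pos_of_pos (by linarith) _
  set s := Real.log m - Real.log k with hs
  have hs0 : 0 ≤ s := by linarith
  have hratio : (Real.log m) ^ β ≤ (Real.log k) ^ β * Real.exp (s / 2) := by
    have e1 : Real.log m ≤ Real.log k * Real.exp (s / Real.log k) := by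
      have := Real.add_one_le_exp (s / Real.log k)
      calc Real.log m = Real.log k * (s / Real.log k + 1) := by
            have : Real.log k ≠ 0 := by linarith
            field_simp
            linarith
        _ ≤ _ := by gcongr
    calc (Real.log m) ^ β ≤ (Real.log k * Real.exp (s / Real.log k)) ^ β :=
          Real.rpow_le_rpow (by linarith) e1 hβ.le
      _ = (Real.log k) ^ β * Real.exp (s / Real.log k * β) := by
          rw [Real.mul_rpow (by linarith) (Real.exp_pos _).le, ← Real.exp_mul]
      _ ≤ _ := by
          have : s / Real.log k * β ≤ s / 2 := by
            rw [div_mul_eq_mul_div, div_le_div_iff₀ (by linarith) (by norm_num)]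
            nlinarith
          gcongr
  set q := Real.exp (s / 2) with hq
  have hq0 : 0 < q := Real.exp_pos _
  have hmk : m = k * q ^ 2 := by
    have : q ^ 2 = Real.exp s := by rw [hq, ← Real.exp_nat_mul]; congr 1; push_cast; ring
    rw [this, hs, Real.exp_sub, Real.exp_log hm0, Real.exp_log hk0]
    field_simp
  have hfk : lam * k / (Real.log k) ^ β ≤ lam * (k * q) / (Real.log m) ^ β := by
    rw [div_le_div_iff₀ hA hB]
    have : 0 ≤ lam * k := by positivity
    nlinarith [mul_le_mul_of_nonneg_left hratio this]
  have key : lam * (m - k) / (2 * (Real.log m) ^ β)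
      ≤ lam * m / (Real.log m) ^ β - lam * (k * q) / (Real.log m) ^ β := by
    rw [← sub_div, div_le_div_iff₀ (by positivity) hB]
    have : lam * (m - k) ≤ 2 * (lam * m - lam * (k * q)) := by
      rw [hmk]
      have := mul_nonneg (mul_nonneg hlam.le hk0.le) (sq_nonneg (q - 1))
      nlinarith
    nlinarith [mul_le_mul_of_nonneg_right this hB.le]
  unfold rate
  linarith

/-! ### Sums over separated points -/

theorem sum_exp_neg_le {δ : ℝ} (hδ : 0 < δ) (S : Finset ℕ) :
    ∑ j ∈ S, Real.exp (-(δ * j)) ≤ 1 + 1 / δ := by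
  have hr : Real.exp (-δ) < 1 := Real.exp_lt_one_iff.2 (by linarith)
  have heq : ∀ j : ℕ, Real.exp (-(δ * j)) = Real.exp (-δ) ^ j := by
    intro j; rw [← Real.exp_nat_mul]; congr 1; ring
  simp_rw [heq]
  have hpos := Real.exp_pos (-δ)
  calc ∑ j ∈ S, Real.exp (-δ) ^ j ≤ ∑' j : ℕ, Real.exp (-δ) ^ j :=
        (summable_geometric_of_lt_one hpos.le hr).sum_le_tsum S (fun _ _ => by positivity)
    _ = (1 - Real.exp (-δ))⁻¹ := tsum_geometric_of_lt_one hpos.le hr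
    _ ≤ 1 + 1 / δ := by
        have h1 : Real.exp (-δ) * (1 + δ) ≤ 1 := by
          have := Real.add_one_le_exp δ
          calc Real.exp (-δ) * (1 + δ) ≤ Real.exp (-δ) * Real.exp δ := by gcongr; linarith
            _ = 1 := by rw [← Real.exp_add]; simp
        have h2 : δ ≤ (1 - Real.exp (-δ)) * (1 + δ) := by linarith
        rw [inv_le_iff_one_le_mul₀ (by linarith)]
        have : 1 + 1 / δ = (1 + δ) / δ := by field_simp; ring
        rw [this, div_mul_eq_mul_div, le_div_iff₀ hδ]
        linarith

/-- A sum of `exp (-|x|)` over `δ`-separated reals is dominated by two geometric series, one on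
each side of the origin. -/
theorem sum_exp_neg_abs_le {δ : ℝ} (hδ : 0 < δ) (S : Finset ℕ) (x : ℕ → ℝ)
    (hx : ∀ k ∈ S, ∀ m ∈ S, k ≤ m → δ * ((m : ℝ) - k) ≤ x m - x k) :
    ∑ k ∈ S, Real.exp (-|x k|) ≤ 2 * (1 + 1 / δ) := by
  have hnn : 0 ≤ 1 + 1 / δ := by positivity
  rw [← Finset.sum_filter_add_sum_filter_not S (fun k => 0 ≤ x k)]
  have hP : ∑ k ∈ S with 0 ≤ x k, Real.exp (-|x k|) ≤ 1 + 1 / δ := by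
    rcases (S.filter (fun k => 0 ≤ x k)).eq_empty_or_nonempty with h | h
    · rw [h]; simpa using hnn
    set n := (S.filter (fun k => 0 ≤ x k)).min' h
    have hn := Finset.mem_filter.1 ((S.filter (fun k => 0 ≤ x k)).min'_mem h)
    have hle : ∀ k ∈ S.filter (fun k => 0 ≤ x k), n ≤ k := fun k hk => Finset.min'_le _ _ hk
    calc ∑ k ∈ S with 0 ≤ x k, Real.exp (-|x k|)
        ≤ ∑ k ∈ S with 0 ≤ x k, Real.exp (-(δ * ((k - n : ℕ) : ℝ))) := by
          apply Finset.sum_le_sum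
          intro k hk
          have h1 := hle k hk
          obtain ⟨h2, h3⟩ := Finset.mem_filter.1 hk
          have h4 := hx n hn.1 k h2 h1
          rw [abs_of_nonneg h3, Nat.cast_sub h1]
          have := hn.2
          apply Real.exp_le_exp.2
          linarith
      _ = ∑ j ∈ (S.filter (fun k => 0 ≤ x k)).image (fun k => k - n), Real.exp (-(δ * (j : ℝ))) := by
          rw [Finset.sum_image]
          intro a ha b hb hab
          have := hle a ha
          have := hle b hb
          simp only at hab
          omega
      _ ≤ _ := sum_exp_neg_le hδ _
  have hN : ∑ k ∈ S with ¬ 0 ≤ x k, Real.exp (-|x k|) ≤ 1 + 1 / δ := by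
    rcases (S.filter (fun k => ¬ 0 ≤ x k)).eq_empty_or_nonempty with h | h
    · rw [h]; simpa using hnn
    set n := (S.filter (fun k => ¬ 0 ≤ x k)).max' h
    have hn := Finset.mem_filter.1 ((S.filter (fun k => ¬ 0 ≤ x k)).max'_mem h)
    have hle : ∀ k ∈ S.filter (fun k => ¬ 0 ≤ x k), k ≤ n := fun k hk => Finset.le_max' _ _ hk
    calc ∑ k ∈ S with ¬ 0 ≤ x k, Real.exp (-|x k|)
        ≤ ∑ k ∈ S with ¬ 0 ≤ x k, Real.exp (-(δ * ((n - k : ℕ) : ℝ))) := by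
          apply Finset.sum_le_sum
          intro k hk
          have h1 := hle k hk
          obtain ⟨h2, h3⟩ := Finset.mem_filter.1 hk
          have h4 := hx k h2 n hn.1 h1
          rw [abs_of_neg (not_le.1 h3), Nat.cast_sub h1]
          have := not_le.1 hn.2
          apply Real.exp_le_exp.2
          linarith
      _ = ∑ j ∈ (S.filter (fun k => ¬ 0 ≤ x k)).image (fun k => n - k),
            Real.exp (-(δ * (j : ℝ))) := by
          rw [Finset.sum_image]
          intro a ha b hb hab
          have := hle a ha
          have := hle b hb
          simp only at hab
          omega
      _ ≤ _ := sum_exp_neg_le hδ _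
  linarith

/-! ### Bounds for a single summand -/

theorem mul_one_sub_pow_le {p : ℝ} (hp : 0 ≤ p) (hp1 : p ≤ 1) (v : ℕ) :
    (v : ℝ) * (p * (1 - p) ^ v) ≤ (v * p) * Real.exp (-(v * p)) := by
  have h : (1 - p) ^ v ≤ Real.exp (-(v * p)) := by
    calc (1 - p) ^ v ≤ Real.exp (-p) ^ v :=
          pow_le_pow_left₀ (by linarith) (Real.one_sub_le_exp_neg p) v
      _ = _ := by rw [← Real.exp_nat_mul]; congr 1; ring
  rw [← mul_assoc]
  gcongr

theorem mul_exp_neg_le_abs (x : ℝ) :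
    Real.exp (-x) * Real.exp (-Real.exp (-x)) ≤ 2 * Real.exp (-|x|) := by
  rcases le_total 0 x with h | h
  · rw [abs_of_nonneg h]
    have h1 : Real.exp (-Real.exp (-x)) ≤ 1 :=
      Real.exp_le_one_iff.2 (by have := Real.exp_pos (-x); linarith)
    have := Real.exp_pos (-x)
    nlinarith
  · rw [abs_of_nonpos h, neg_neg]
    set a := Real.exp (-x) with ha
    have ha0 : 0 < a := Real.exp_pos _
    have hx : Real.exp x = a⁻¹ := by rw [ha, Real.exp_neg, inv_inv]
    have := Real.quadratic_le_exp_of_nonneg ha0.le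
    rw [hx, Real.exp_neg, ← div_eq_mul_inv, ← div_eq_mul_inv,
      div_le_div_iff₀ (Real.exp_pos _) ha0]
    nlinarith

theorem mul_exp_neg_le_one (a : ℝ) : a * Real.exp (-a) ≤ 1 := by
  rw [Real.exp_neg, ← div_eq_mul_inv, div_le_one (Real.exp_pos _)]
  linarith [Real.add_one_le_exp a]

theorem eventually_rate_ge {lam β : ℝ} (hlam : 0 < lam) :
    ∀ᶠ x : ℝ in atTop, √x + 2 * Real.log x ≤ rate lam β x := by
  have h := (isLittleO_log_rpow_rpow_atTop β (show (0 : ℝ) < 1 / 2 by norm_num)).bound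
    (show 0 < lam / 5 by positivity)
  filter_upwards [h, eventually_gt_atTop 1] with x hx hx1
  have hlog : 0 < Real.log x := Real.log_pos hx1
  have hA : 0 < (Real.log x) ^ β := Real.rpow_pos_of_pos hlog _
  rw [Real.norm_of_nonneg hA.le, Real.norm_of_nonneg (by positivity), ← Real.sqrt_eq_rpow] at hx
  have hs : 0 < √x := Real.sqrt_pos.2 (by linarith)
  have hss : √x * √x = x := Real.mul_self_sqrt (by linarith)
  have h1 : Real.log x ≤ 2 * √x := by
    have := Real.log_le_sub_one_of_pos hs
    rw [Real.log_sqrt (by linarith)] at this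
    linarith
  have h2 : 5 * √x ≤ rate lam β x := by
    unfold rate
    rw [le_div_iff₀ hA]
    nlinarith [mul_le_mul_of_nonneg_left hx hs.le]
  linarith

/-- If `v p` lies in `[exp (-B), 1]`, then `p ≤ 1/2`, so `1 - p ≥ exp (-2p)` and
`(1 - p)^v ≥ exp (-2)`. -/
theorem term_ge {p B : ℝ} {v : ℕ} (hv : 2 ≤ v) (hB : Real.exp (-B) ≤ v * p)
    (h1 : v * p ≤ 1) : Real.exp (-B) * Real.exp (-2) ≤ v * (p * (1 - p) ^ v) := by
  have hv' : (2 : ℝ) ≤ v := by exact_mod_cast hv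
  have hp0 : 0 < p := by
    have := (Real.exp_pos (-B)).trans_le hB
    exact pos_of_mul_pos_right this (by positivity)
  have hp : p ≤ 1 / 2 := by nlinarith
  have h2 : Real.exp (-(2 * p)) ≤ 1 - p := by
    rw [Real.exp_neg, inv_le_iff_one_le_mul₀ (Real.exp_pos _)]
    have := Real.add_one_le_exp (2 * p)
    nlinarith
  have h3 : Real.exp (-2) ≤ (1 - p) ^ v := by
    calc Real.exp (-2) ≤ Real.exp (-(2 * p)) ^ v := by
          rw [← Real.exp_nat_mul]; apply Real.exp_le_exp.2; nlinarith
      _ ≤ _ := pow_le_pow_left₀ (Real.exp_pos _).le h2 v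
  rw [← mul_assoc]
  gcongr

/-! ### Order of growth of the tail index -/

/-- If `p_k = c exp(-λ k / (ln k)^β)` for all `k ≥ k₀ ≥ 2`
(near-exponential tail, `λ > 0`, `β > 0`), then `τ_v ≍ (ln ln v)^β`: there are constants
`0 < c₁ ≤ c₂` and an integer `V` with `c₁ (ln ln v)^β ≤ τ_v ≤ c₂ (ln ln v)^β` for all
`v ≥ V`. -/
theorem tailIdx_nearExpTail
    (p : ℕ → ℝ) (hp : ∀ k, 0 ≤ p k) (hsum : ∑' k, p k = 1)
    (c lam β : ℝ) (hc : 0 < c) (hlam : 0 < lam) (hβ : 0 < β)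
    (k₀ : ℕ) (hk₀ : 2 ≤ k₀)
    (hnear : ∀ k, k₀ ≤ k → p k = c * Real.exp (-lam * (k : ℝ) / (Real.log k) ^ β)) :
    ∃ c₁ c₂ : ℝ, ∃ V : ℕ, 0 < c₁ ∧ c₁ ≤ c₂ ∧
      ∀ v : ℕ, V ≤ v →
        c₁ * (Real.log (Real.log v)) ^ β ≤ tailIdx p v ∧
        tailIdx p v ≤ c₂ * (Real.log (Real.log v)) ^ β := by
  have hps : Summable p := by
    by_contra h
    rw [tsum_eq_zero_of_not_summable h] at hsum
    exact zero_ne_one hsum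
  have hp1 : ∀ k, p k ≤ 1 := fun k => hsum ▸ hps.le_tsum k (fun j _ => hp j)
  have htnn : ∀ (v k : ℕ), 0 ≤ (v : ℝ) * (p k * (1 - p k) ^ v) := fun v k =>
    mul_nonneg (by positivity) (mul_nonneg (hp k) (pow_nonneg (by linarith [hp1 k]) _))
  have hts : ∀ v : ℕ, Summable fun k => (v : ℝ) * (p k * (1 - p k) ^ v) := by
    intro v
    refine Summable.mul_left _ (Summable.of_nonneg_of_le (fun k => ?_) (fun k => ?_) hps)
    · exact mul_nonneg (hp k) (pow_nonneg (by linarith [hp1 k]) _)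
    · exact mul_le_of_le_one_right (hp k) (pow_le_one₀ (by linarith [hp1 k]) (by linarith [hp k]))
  have htail : ∀ v : ℕ, tailIdx p v = ∑' k, (v : ℝ) * (p k * (1 - p k) ^ v) := by
    intro v; rw [tailIdx, zetaIdx, tsum_mul_left]
  -- Beyond `k₁` all the growth estimates on `rate` are available.
  obtain ⟨k₁, hk₁⟩ : ∃ k₁ : ℕ, ∀ k : ℕ, k₁ ≤ k → k₀ ≤ k ∧ 1 ≤ Real.log k ∧ 2 * β ≤ Real.log k ∧
      √(k : ℝ) + 2 * Real.log k ≤ rate lam β k := by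
    have hlog : Tendsto (fun k : ℕ => Real.log k) atTop atTop :=
      Real.tendsto_log_atTop.comp tendsto_natCast_atTop_atTop
    exact eventually_atTop.1 ((eventually_ge_atTop k₀).and ((hlog.eventually_ge_atTop 1).and
      ((hlog.eventually_ge_atTop (2 * β)).and
        (tendsto_natCast_atTop_atTop.eventually (eventually_rate_ge hlam)))))
  have hkpos : ∀ k : ℕ, k₁ ≤ k → (0 : ℝ) < k := fun k hk => by
    have := (hk₁ k hk).1
    have : 0 < k := by omega
    exact_mod_cast this
  have hpk : ∀ k : ℕ, k₁ ≤ k → p k = c * Real.exp (-rate lam β k) := by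
    intro k hk
    rw [hnear k (hk₁ k hk).1, rate]
    congr 2
    ring
  have hmono : ∀ k m : ℕ, k₁ ≤ k → k ≤ m → rate lam β k ≤ rate lam β m := by
    intro k m hk hkm
    obtain ⟨_, h1, h2, _⟩ := hk₁ k hk
    have hkm' : (k : ℝ) ≤ m := by exact_mod_cast hkm
    have h3 := rate_sub_ge hlam hβ h1 h2 (hkpos k hk) hkm'
    have : 0 ≤ lam * ((m : ℝ) - k) / (2 * (Real.log m) ^ β) := by
      have : 0 ≤ (m : ℝ) - k := by linarith
      have : 0 ≤ (Real.log m) ^ β := Real.rpow_nonneg (by linarith [(hk₁ m (hk.trans hkm)).2.1]) _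
      positivity
    linarith
  have hvp : ∀ v : ℕ, 0 < v → ∀ k, k₁ ≤ k →
      (v : ℝ) * p k = Real.exp (-(rate lam β k - Real.log v - Real.log c)) := by
    intro v hv k hk
    have hv' : (0 : ℝ) < v := by exact_mod_cast hv
    rw [hpk k hk]
    rw [show -(rate lam β k - Real.log v - Real.log c)
        = Real.log v + (Real.log c + -rate lam β k) by ring, Real.exp_add, Real.exp_add,
      Real.exp_log hv', Real.exp_log hc]
  have hlogv : Tendsto (fun v : ℕ => Real.log v) atTop atTop :=
    Real.tendsto_log_atTop.comp tendsto_natCast_atTop_atTop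
  have hsq : Summable fun k : ℕ => c / (k : ℝ) ^ 2 := by
    simpa [div_eq_mul_inv] using (Real.summable_nat_pow_inv.2 (by norm_num : 1 < 2)).mul_left c
  set Z := ∑' k : ℕ, c / (k : ℝ) ^ 2 with hZ
  have hZ0 : 0 ≤ Z := tsum_nonneg fun k => by positivity
  have hupper : ∀ v : ℕ, Real.exp 1 ≤ Real.log v →
      tailIdx p v ≤ (k₁ + 4 + Z + 8 / lam * 2 ^ β) * (Real.log (Real.log v)) ^ β := by
    intro v hvL
    set L := Real.log v with hL
    have hL0 : 0 < L := (Real.exp_pos 1).trans_le hvL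
    have hLL : 1 ≤ Real.log L := (Real.le_log_iff_exp_le hL0).2 hvL
    have hv0 : 0 < v := by
      rcases Nat.eq_zero_or_pos v with h | h
      · rw [hL, h] at hL0; simp at hL0
      · exact h
    have hv' : (0 : ℝ) < v := by exact_mod_cast hv0
    set W := (Real.log L) ^ β with hW
    have hW1 : 1 ≤ W := Real.one_le_rpow hLL hβ.le
    -- For `k < (ln v)^2` one has `(ln k)^β ≤ (2 ln ln v)^β = D`, so `δ` is a separation there.
    set D := 2 ^ β * W with hD
    have hD0 : 0 < D := by positivity
    set δ := lam / (2 * D) with hδ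
    have hδ0 : 0 < δ := by positivity
    set K := ⌈L ^ 2⌉₊ with hK
    rw [htail]
    have hfin : ∀ s : Finset ℕ, ∑ k ∈ s, (v : ℝ) * (p k * (1 - p k) ^ v)
        ≤ (k₁ + 4 + Z + 8 / lam * 2 ^ β) * W := by
      intro s
      rw [← Finset.sum_filter_add_sum_filter_not s (fun k => k < k₁),
        ← Finset.sum_filter_add_sum_filter_not (s.filter (fun k => ¬ k < k₁)) (fun k => k < K)]
      have b1 : ∑ k ∈ s with k < k₁, (v : ℝ) * (p k * (1 - p k) ^ v) ≤ k₁ := by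
        calc _ ≤ ∑ k ∈ s with k < k₁, (1 : ℝ) := Finset.sum_le_sum fun k _ =>
              (mul_one_sub_pow_le (hp k) (hp1 k) v).trans (mul_exp_neg_le_one _)
          _ = ((s.filter (fun k => k < k₁)).card : ℝ) := by simp
          _ ≤ ((Finset.range k₁).card : ℝ) := by
              have : (s.filter (fun k => k < k₁)).card ≤ (Finset.range k₁).card := by
                apply Finset.card_le_card
                intro k hk
                exact Finset.mem_range.2 (Finset.mem_filter.1 hk).2
              exact_mod_cast this
          _ = k₁ := by simp
      have b2 : ∑ k ∈ (s.filter (fun k => ¬ k < k₁)) with k < K, (v : ℝ) * (p k * (1 - p k) ^ v)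
          ≤ 2 * (2 * (1 + 1 / δ)) := by
        have hmem : ∀ k ∈ (s.filter (fun k => ¬ k < k₁)).filter (fun k => k < K),
            k₁ ≤ k ∧ (k : ℝ) < L ^ 2 := by
          intro k hk
          simp only [Finset.mem_filter] at hk
          exact ⟨not_lt.1 hk.1.2, Nat.lt_ceil.1 hk.2⟩
        calc _ ≤ ∑ k ∈ (s.filter (fun k => ¬ k < k₁)) with k < K,
              2 * Real.exp (-|rate lam β k - Real.log v - Real.log c|) := by
              refine Finset.sum_le_sum fun k hk => ?_
              refine (mul_one_sub_pow_le (hp k) (hp1 k) v).trans ?_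
              rw [hvp v hv0 k (hmem k hk).1]
              exact mul_exp_neg_le_abs _
          _ = 2 * ∑ k ∈ (s.filter (fun k => ¬ k < k₁)) with k < K,
              Real.exp (-|rate lam β k - Real.log v - Real.log c|) := by rw [Finset.mul_sum]
          _ ≤ _ := by
              gcongr
              refine sum_exp_neg_abs_le hδ0 _
                (fun k => rate lam β k - Real.log v - Real.log c) fun k hk m hm hkm => ?_
              obtain ⟨hk1, hk2⟩ := hmem k hk
              obtain ⟨hm1, hm2⟩ := hmem m hm
              obtain ⟨_, h1, h2, _⟩ := hk₁ k hk1
              have hkm' : (k : ℝ) ≤ m := by exact_mod_cast hkm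
              have h3 := rate_sub_ge hlam hβ h1 h2 (hkpos k hk1) hkm'
              have hlm : 1 ≤ Real.log m := (hk₁ m hm1).2.1
              have h4 : (Real.log m) ^ β ≤ D := by
                have : Real.log m ≤ 2 * Real.log L := by
                  have := Real.log_le_log (hkpos m hm1) hm2.le
                  rw [Real.log_pow] at this
                  exact_mod_cast this
                calc (Real.log m) ^ β ≤ (2 * Real.log L) ^ β :=
                      Real.rpow_le_rpow (by linarith) this hβ.le
                  _ = D := by rw [hD, hW, Real.mul_rpow (by norm_num) (by linarith)]
              have h5 : δ * ((m : ℝ) - k) ≤ lam * ((m : ℝ) - k) / (2 * (Real.log m) ^ β) := by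
                rw [hδ, div_mul_eq_mul_div]
                have : 0 ≤ (m : ℝ) - k := by linarith
                have : 0 < (Real.log m) ^ β := Real.rpow_pos_of_pos (by linarith) _
                gcongr
              linarith
      have b3 : ∑ k ∈ (s.filter (fun k => ¬ k < k₁)) with ¬ k < K,
          (v : ℝ) * (p k * (1 - p k) ^ v) ≤ Z := by
        calc _ ≤ ∑ k ∈ (s.filter (fun k => ¬ k < k₁)) with ¬ k < K, c / (k : ℝ) ^ 2 := by
              refine Finset.sum_le_sum fun k hk => ?_
              simp only [Finset.mem_filter, not_lt] at hk
              have hkk := hk.1.2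
              have hkL : L ^ 2 ≤ (k : ℝ) := Nat.ceil_le.1 hk.2
              have hk0 := hkpos k hkk
              have h1 : L ≤ √(k : ℝ) := Real.le_sqrt_of_sq_le hkL
              have h2 := (hk₁ k hkk).2.2.2
              calc (v : ℝ) * (p k * (1 - p k) ^ v) ≤ v * p k := by
                    gcongr
                    exact mul_le_of_le_one_right (hp k)
                      (pow_le_one₀ (by linarith [hp1 k]) (by linarith [hp k]))
                _ = Real.exp (-(rate lam β k - Real.log v - Real.log c)) := hvp v hv0 k hkk
                _ ≤ Real.exp (Real.log c - 2 * Real.log k) := by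
                    apply Real.exp_le_exp.2; linarith
                _ = c / (k : ℝ) ^ 2 := by
                    rw [Real.exp_sub, Real.exp_log hc, two_mul, Real.exp_add,
                      Real.exp_log hk0, sq]
          _ ≤ Z := hsq.sum_le_tsum _ (fun k _ => by positivity)
      have hinv : 1 / δ = 2 / lam * 2 ^ β * W := by
        rw [hδ, hD]; field_simp
      rw [hinv] at b2
      have hk1nn : (0 : ℝ) ≤ k₁ := by positivity
      nlinarith [mul_nonneg (add_nonneg (add_nonneg hk1nn (by norm_num : (0:ℝ) ≤ 4)) hZ0)
        (sub_nonneg.2 hW1), show 8 / lam * 2 ^ β * W = 4 * (2 / lam * 2 ^ β * W) by ring]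
    exact (hts v).tsum_le_of_sum_le hfin
  have hlower : ∀ᶠ v : ℕ in atTop,
      Real.exp (-(2 * lam)) * Real.exp (-2) * (1 / 2) ^ β * (Real.log (Real.log v)) ^ β
        ≤ tailIdx p v := by
    have hlin : ∀ᶠ L : ℝ in atTop, √L ≤ (L + Real.log c) / lam - 1 := by
      have h : Tendsto (fun L : ℝ => √L * (√L / lam - 1)) atTop atTop := by
        refine Real.tendsto_sqrt_atTop.atTop_mul_atTop₀ ?_
        exact tendsto_atTop_add_const_right _ _ (Real.tendsto_sqrt_atTop.atTop_div_const hlam)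
      filter_upwards [h.eventually_ge_atTop (1 - Real.log c / lam), eventually_ge_atTop 0]
        with L h1 h2
      have : √L * (√L / lam) = L / lam := by rw [← mul_div_assoc, Real.mul_self_sqrt h2]
      rw [mul_sub, this] at h1
      rw [add_div]
      linarith
    filter_upwards [hlogv.eventually hlin, hlogv.eventually_ge_atTop (Real.exp 1),
      hlogv.eventually_gt_atTop (rate lam β k₁ - Real.log c), eventually_ge_atTop 2]
      with v hv1 hv2 hv3 hv4
    have hv0 : 0 < v := by omega
    set L := Real.log v with hL
    have hL0 : 0 < L := (Real.exp_pos 1).trans_le hv2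
    have hLL : 1 ≤ Real.log L := (Real.le_log_iff_exp_le hL0).2 hv2
    have hex : ∃ k : ℕ, k₁ ≤ k ∧ L + Real.log c ≤ rate lam β k := by
      have h : Tendsto (fun k : ℕ => √(k : ℝ)) atTop atTop :=
        Real.tendsto_sqrt_atTop.comp tendsto_natCast_atTop_atTop
      obtain ⟨k, h1, h2⟩ := ((h.eventually_ge_atTop (L + Real.log c)).and
        (eventually_ge_atTop k₁)).exists
      obtain ⟨_, h3, _, h4⟩ := hk₁ k h2
      exact ⟨k, h2, by linarith⟩
    classical
    -- `n` is the index just before `v p_k` first drops to at most `1` (beyond `k₁`).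
    obtain ⟨n, hn1, hn2, hn3⟩ : ∃ n : ℕ, k₁ ≤ n ∧ rate lam β n < L + Real.log c ∧
        L + Real.log c ≤ rate lam β (n + 1 : ℕ) := by
      have hM := Nat.find_spec hex
      set M := Nat.find hex with hMdef
      have hne : M ≠ k₁ := by
        intro h
        rw [h] at hM
        linarith [hM.2]
      have hlt : k₁ < M := lt_of_le_of_ne hM.1 (Ne.symm hne)
      refine ⟨M - 1, by omega, ?_, ?_⟩
      · have := Nat.find_min hex (show M - 1 < Nat.find hex by omega)
        by_contra hcon
        exact this ⟨by omega, not_lt.1 hcon⟩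
      · rw [show M - 1 + 1 = M by omega]; exact hM.2
    have hln : 1 ≤ Real.log n := (hk₁ n hn1).2.1
    have hn0 := hkpos n hn1
    have hnL : √L ≤ n := by
      have hl1 := (hk₁ (n + 1) (by omega)).2.1
      have h1 : rate lam β (n + 1 : ℕ) ≤ lam * (n + 1 : ℕ) := by
        unfold rate
        exact div_le_self (by positivity) (Real.one_le_rpow hl1 hβ.le)
      have h2 : (L + Real.log c) / lam ≤ (n + 1 : ℕ) := by
        rw [div_le_iff₀ hlam]; linarith
      push_cast at h2
      linarith
    set D := (Real.log n) ^ β with hD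
    have hD1 : 1 ≤ D := Real.one_le_rpow hln hβ.le
    have hDW : (1 / 2) ^ β * (Real.log L) ^ β ≤ D := by
      rw [← Real.mul_rpow (by norm_num) (by linarith)]
      refine Real.rpow_le_rpow (by linarith) ?_ hβ.le
      have := Real.log_le_log (Real.sqrt_pos.2 hL0) hnL
      rw [Real.log_sqrt hL0.le] at this
      linarith
    have hterm : ∀ k ∈ Finset.Ioc n (n + ⌈D⌉₊),
        Real.exp (-(2 * lam)) * Real.exp (-2) ≤ (v : ℝ) * (p k * (1 - p k) ^ v) := by
      intro k hk
      obtain ⟨hk1, hk2⟩ := Finset.mem_Ioc.1 hk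
      have hkk : k₁ ≤ k := by omega
      have hnk : (n : ℝ) ≤ k := by exact_mod_cast hk1.le
      have hlo := hmono (n + 1) k (by omega) (by omega)
      have hup := rate_sub_le hlam hβ hln hn0 hnk
      have hkn : (k : ℝ) - n ≤ 2 * D := by
        have h1 : (k : ℝ) ≤ n + ⌈D⌉₊ := by exact_mod_cast hk2
        have h2 := Nat.ceil_lt_add_one (show 0 ≤ D by linarith)
        linarith
      have hup2 : lam * ((k : ℝ) - n) / D ≤ 2 * lam := by
        rw [div_le_iff₀ (by linarith)]
        nlinarith
      refine term_ge hv4 ?_ ?_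
      · rw [hvp v hv0 k hkk]
        apply Real.exp_le_exp.2
        linarith
      · rw [hvp v hv0 k hkk]
        apply Real.exp_le_one_iff.2
        linarith
    rw [htail]
    calc Real.exp (-(2 * lam)) * Real.exp (-2) * (1 / 2) ^ β * (Real.log L) ^ β
        = Real.exp (-(2 * lam)) * Real.exp (-2) * ((1 / 2) ^ β * (Real.log L) ^ β) := by ring
      _ ≤ Real.exp (-(2 * lam)) * Real.exp (-2) * ⌈D⌉₊ := by
          have := Nat.le_ceil D
          gcongr
          linarith
      _ = ∑ k ∈ Finset.Ioc n (n + ⌈D⌉₊), Real.exp (-(2 * lam)) * Real.exp (-2) := by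
          simp; ring
      _ ≤ ∑ k ∈ Finset.Ioc n (n + ⌈D⌉₊), (v : ℝ) * (p k * (1 - p k) ^ v) :=
          Finset.sum_le_sum hterm
      _ ≤ _ := (hts v).sum_le_tsum _ (fun k _ => htnn v k)
  obtain ⟨V, hV⟩ := eventually_atTop.1
    (hlower.and (hlogv.eventually_ge_atTop (Real.exp 1)))
  refine ⟨Real.exp (-(2 * lam)) * Real.exp (-2) * (1 / 2) ^ β,
    max (Real.exp (-(2 * lam)) * Real.exp (-2) * (1 / 2) ^ β)
      (k₁ + 4 + Z + 8 / lam * 2 ^ β), V, by positivity, le_max_left _ _, fun v hv => ?_⟩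
  obtain ⟨h1, h2⟩ := hV v hv
  refine ⟨h1, (hupper v h2).trans ?_⟩
  have hLL : 1 ≤ Real.log (Real.log v) :=
    (Real.le_log_iff_exp_le ((Real.exp_pos 1).trans_le h2)).2 h2
  have : 0 ≤ (Real.log (Real.log v)) ^ β := Real.rpow_nonneg (by linarith) _
  gcongr
  exact le_max_right _ _
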